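/- arXiv:1706.00518 — 2 statements merged into one kernel-verified Lean document; each statement's English description precedes it below -/
import Mathlib

section
/- Let V be a finite-dimensional irreducible □_q-module of type 1 and diameter d. Regard V as a U_q^+-module via the algebra homomorphism κ: U_q^+ → □_q sending x ↦ x_0 and y ↦ x_2 (so x acts on V as x_0 and y acts as x_2). Then this U_q^+-module V is irreducible, the actions of x and y on V are not nilpotent, and each of x, y acts semisimply on V with set of distinct eigenvalues {q^{d−2n} : 0 ≤ n ≤ d}; that is, V is a NonNil irreducible U_q^+-module of type (1,1). -/
/-!
Write `E_i(n)` for the eigenspace of `x_i` with eigenvalue `q^(d-2n)`, and put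
`L_i(k) = ∑_{m<k} E_i(m)`, `U_i(k) = ∑_{m≥k} E_i(m)`, so that `V = L_i(k) ⊕ U_i(k)`.

The relation `q x_i x_{i+1} - q⁻¹ x_{i+1} x_i = q - q⁻¹` shows that `x_{i+1} - q^(2n-d)` maps
`E_i(n)` into `E_i(n+1)`, and that `x_i - q^(d-2n)` maps the `q^(2n-d)`-eigenspace of `x_{i+1}`
into its `q^(2(n+1)-d)`-eigenspace. By triangularity (`eig_le_upFlag`, applied in both directions)
`U_i(k) = L_{i+1}(d+1-k)` (`upFlag_eq_lowFlag`).

Let `W` be invariant under `x_0` and `x_2`. Then `W` splits along `L_0(k) ⊕ U_0(k)` and along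
`L_2(k) ⊕ U_2(k)`. On the other hand `U_0(k)` and `L_2(k)` are the two complementary flag
components `L_1(d+1-k)`, `U_1(d+1-k)` of `x_1`, while `L_0(k)` and `U_2(k)` are complementary
flag components of `x_3`. Hence
`dim (W ∩ U_0) + dim (W ∩ L_2) ≤ dim W` and `dim (W ∩ L_0) + dim (W ∩ U_2) ≤ dim W`;
the four dimensions add up to `2 dim W`, so both are equalities, and `W` splits along the
flags of `x_1` and of `x_3`. This makes `W` invariant under `x_1` and `x_3`
(`invariant_of_split`), so `W` is a `□_q`-submodule, and irreducibility of `V` gives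
`W = 0` or `W = V`.
-/

noncomputable section

open FreeAlgebra

variable (F : Type) [Field F]

/-- The defining relations of the algebra `□_q` (Terwilliger), on the free algebra
with generators `x_i`, `i ∈ ℤ/4ℤ`. -/
inductive BoxRel (q : F) : FreeAlgebra F (ZMod 4) → FreeAlgebra F (ZMod 4) → Prop
  | rel1 (i : ZMod 4) : BoxRel q
      (q • (ι F i * ι F (i + 1)) - q⁻¹ • (ι F (i + 1) * ι F i))
      ((q - q⁻¹) • (1 : FreeAlgebra F (ZMod 4)))
  | rel2 (i : ZMod 4) : BoxRel q
      (ι F i ^ 3 * ι F (i + 2) +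
        ((q ^ 3 - (q⁻¹) ^ 3) / (q - q⁻¹)) • (ι F i * ι F (i + 2) * ι F i ^ 2))
      (((q ^ 3 - (q⁻¹) ^ 3) / (q - q⁻¹)) • (ι F i ^ 2 * ι F (i + 2) * ι F i) +
        ι F (i + 2) * ι F i ^ 3)

/-- The algebra `□_q`, presented by generators and relations. -/
abbrev BoxQ (q : F) : Type := RingQuot (BoxRel F q)

/-- The generators `x_i` of `□_q`. -/
def bx (q : F) (i : ZMod 4) : BoxQ F q :=
  RingQuot.mkAlgHom F (BoxRel F q) (ι F i)

/-- `f` acts semisimply: `V` is spanned by the eigenspaces of `f`. -/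
def SemisimpleOn {V : Type} [AddCommGroup V] [Module F V] (f : Module.End F V) : Prop :=
  (⨆ θ : F, Module.End.eigenspace f θ) = ⊤

/-- The set of (distinct) eigenvalues of `f`. -/
def EigSet {V : Type} [AddCommGroup V] [Module F V] (f : Module.End F V) : Set F :=
  {θ : F | Module.End.eigenspace f θ ≠ ⊥}

/-- The representation `π` of `A` on `V` is irreducible. -/
def IsIrrep {A V : Type} [Ring A] [Algebra F A] [AddCommGroup V] [Module F V]
    (π : A →ₐ[F] Module.End F V) : Prop :=
  Nontrivial V ∧ ∀ W : Submodule F V, (∀ a : A, ∀ v ∈ W, π a v ∈ W) → W = ⊥ ∨ W = ⊤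

/-- Isomorphism of representations of `A`. -/
def RepIso {A V W : Type} [Ring A] [Algebra F A] [AddCommGroup V] [Module F V]
    [AddCommGroup W] [Module F W]
    (π : A →ₐ[F] Module.End F V) (π' : A →ₐ[F] Module.End F W) : Prop :=
  ∃ σ : V ≃ₗ[F] W, ∀ (a : A) (v : V), σ (π a v) = π' a (σ v)

/-- The `□_q`-module given by `π` has type `1` and diameter `d`: each generator `x_i`
acts semisimply with set of distinct eigenvalues `{q^(d-2n) : 0 ≤ n ≤ d}`. -/
def Type1Diam (q : F) {V : Type} [AddCommGroup V] [Module F V]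
    (π : BoxQ F q →ₐ[F] Module.End F V) (d : ℕ) : Prop :=
  ∀ i : ZMod 4, SemisimpleOn F (π (bx F q i)) ∧
    EigSet F (π (bx F q i)) =
      {θ : F | ∃ n : ℕ, n ≤ d ∧ θ = q ^ ((d : ℤ) - 2 * (n : ℤ))}

/-- The defining relations of `U_q^+`, the positive part of `U_q(L(sl₂))`;
the standard generators are `x = ι F true` and `y = ι F false`. -/
inductive UqpRel (q : F) : FreeAlgebra F Bool → FreeAlgebra F Bool → Prop
  | relx : UqpRel q
      (ι F true ^ 3 * ι F false +
        ((q ^ 3 - (q⁻¹) ^ 3) / (q - q⁻¹)) • (ι F true * ι F false * ι F true ^ 2))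
      (((q ^ 3 - (q⁻¹) ^ 3) / (q - q⁻¹)) • (ι F true ^ 2 * ι F false * ι F true) +
        ι F false * ι F true ^ 3)
  | rely : UqpRel q
      (ι F false ^ 3 * ι F true +
        ((q ^ 3 - (q⁻¹) ^ 3) / (q - q⁻¹)) • (ι F false * ι F true * ι F false ^ 2))
      (((q ^ 3 - (q⁻¹) ^ 3) / (q - q⁻¹)) • (ι F false ^ 2 * ι F true * ι F false) +
        ι F true * ι F false ^ 3)

/-- The algebra `U_q^+`. -/
abbrev Uqp (q : F) : Type := RingQuot (UqpRel F q)

/-- The standard generator `x` of `U_q^+`. -/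
def ux (q : F) : Uqp F q := RingQuot.mkAlgHom F (UqpRel F q) (ι F true)

/-- The standard generator `y` of `U_q^+`. -/
def uy (q : F) : Uqp F q := RingQuot.mkAlgHom F (UqpRel F q) (ι F false)

/-! ### Flags of eigenspaces -/

section Flags

variable {F} {V : Type} [AddCommGroup V] [Module F V]

/-- Sum of the eigenspaces of `T` for the eigenvalues `a m` with `m ≥ k`. -/
def upFlag (T : Module.End F V) (a : ℕ → F) (k : ℕ) : Submodule F V :=
  ⨆ m : ℕ, ⨆ _ : k ≤ m, T.eigenspace (a m)

/-- Sum of the eigenspaces of `T` for the eigenvalues `a m` with `m < k`. -/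
def lowFlag (T : Module.End F V) (a : ℕ → F) (k : ℕ) : Submodule F V :=
  ⨆ m : ℕ, ⨆ _ : m < k, T.eigenspace (a m)

lemma eig_le_up (T : Module.End F V) (a : ℕ → F) {k m : ℕ} (h : k ≤ m) :
    T.eigenspace (a m) ≤ upFlag T a k :=
  le_iSup₂_of_le m h le_rfl

lemma eig_le_low (T : Module.End F V) (a : ℕ → F) {k m : ℕ} (h : m < k) :
    T.eigenspace (a m) ≤ lowFlag T a k :=
  le_iSup₂_of_le m h le_rfl

lemma upFlag_anti (T : Module.End F V) (a : ℕ → F) {k l : ℕ} (h : k ≤ l) :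
    upFlag T a l ≤ upFlag T a k :=
  iSup₂_le fun _ hm => eig_le_up T a (h.trans hm)

lemma disjoint_low_up (T : Module.End F V) {a : ℕ → F} (ha : Function.Injective a) (k : ℕ) :
    Disjoint (lowFlag T a k) (upFlag T a k) := by
  have hi : iSupIndep fun m : ℕ => T.eigenspace (a m) :=
    (Module.End.eigenspaces_iSupIndep T).comp ha
  have hd := hi.disjoint_biSup_biSup (s := {m | m < k}) (t := {m | k ≤ m})
    (Set.disjoint_left.2 fun m (h1 : m < k) (h2 : k ≤ m) => absurd h1 (not_lt.2 h2))
  exact hd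

/-- For `b` injective, `S - b n` is onto when restricted to `upFlag S b k` with `n < k`. -/
lemma exists_solve (S : Module.End F V) {b : ℕ → F} (hb : Function.Injective b) {n k : ℕ}
    (hnk : n < k) {w : V} (hw : w ∈ upFlag S b k) :
    ∃ u ∈ upFlag S b k, S u - b n • u = w := by
  have : upFlag S b k ≤ (upFlag S b k).map (S - algebraMap F (Module.End F V) (b n)) := by
    refine iSup₂_le fun m hm v hv => ?_
    have hne : b m - b n ≠ 0 := sub_ne_zero.2 fun h => by have := hb h; omega
    refine ⟨(b m - b n)⁻¹ • v, Submodule.smul_mem _ _ (eig_le_up S b hm hv), ?_⟩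
    rw [Module.End.mem_eigenspace_iff] at hv
    simp only [map_smul, LinearMap.sub_apply, hv, Module.algebraMap_end_apply]
    rw [← sub_smul, smul_smul, inv_mul_cancel₀ hne, one_smul]
  obtain ⟨u, hu, h⟩ := this hw
  exact ⟨u, hu, by simpa using h⟩

/-- Triangularity: if `S - b n` maps each `a n`-eigenspace of `T` into the next one, then the
eigenspaces of `T` lie in the flag of `S`-eigenspaces. -/
lemma eig_le_upFlag (T S : Module.End F V) (a : ℕ → F) {b : ℕ → F} (hb : Function.Injective b)
    (d : ℕ) (hd : ∀ n, d < n → T.eigenspace (a n) = ⊥)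
    (hstep : ∀ n, ∀ v ∈ T.eigenspace (a n), S v - b n • v ∈ T.eigenspace (a (n + 1))) (n : ℕ) :
    T.eigenspace (a n) ≤ upFlag S b n := by
  by_cases hn : d < n
  · rw [hd n hn]; exact bot_le
  · intro v hv
    obtain ⟨u, hu, h⟩ := exists_solve S hb (Nat.lt_succ_self n)
      (eig_le_upFlag T S a hb d hd hstep (n + 1) (hstep n v hv))
    have hvu : v - u ∈ S.eigenspace (b n) := by
      rw [Module.End.mem_eigenspace_iff, map_sub, smul_sub]
      rw [sub_eq_sub_iff_add_eq_add] at h ⊢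
      rw [← h, add_comm]
    have := add_mem (eig_le_up S b le_rfl hvu) (upFlag_anti S b (Nat.le_succ n) hu)
    simpa using this
termination_by d + 1 - n

lemma upFlag_le_upFlag (T S : Module.End F V) (a : ℕ → F) {b : ℕ → F}
    (hb : Function.Injective b) (d : ℕ) (hd : ∀ n, d < n → T.eigenspace (a n) = ⊥)
    (hstep : ∀ n, ∀ v ∈ T.eigenspace (a n), S v - b n • v ∈ T.eigenspace (a (n + 1))) (k : ℕ) :
    upFlag T a k ≤ upFlag S b k :=
  iSup₂_le fun m hm => (eig_le_upFlag T S a hb d hd hstep m).trans (upFlag_anti S b hm)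

/-- A `T`-invariant subspace splits along the flags of a diagonalizable `T`. -/
lemma split_of_invariant [FiniteDimensional F V] (T : Module.End F V) (a : ℕ → F)
    (hss : (⨆ θ : F, T.eigenspace θ) = ⊤) (hev : ∀ θ, T.eigenspace θ ≠ ⊥ → ∃ n, θ = a n)
    (W : Submodule F V) (hW : ∀ v ∈ W, T v ∈ W) (k : ℕ) :
    W ≤ W ⊓ lowFlag T a k ⊔ W ⊓ upFlag T a k := by
  have h := Submodule.inf_iSup_genEigenspace (p := W) (f := T) hW (k := 1)
  change W ⊓ (⨆ θ : F, T.eigenspace θ) = ⨆ θ : F, W ⊓ T.eigenspace θ at h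
  rw [hss, inf_top_eq] at h
  conv_lhs => rw [h]
  refine iSup_le fun θ => ?_
  by_cases hθ : T.eigenspace θ = ⊥
  · simp [hθ]
  obtain ⟨n, rfl⟩ := hev θ hθ
  rcases lt_or_ge n k with hn | hn
  · exact (inf_le_inf_left W (eig_le_low T a hn)).trans le_sup_left
  · exact (inf_le_inf_left W (eig_le_up T a hn)).trans le_sup_right

lemma invariant_of_split (T : Module.End F V) {a : ℕ → F} (ha : Function.Injective a)
    (d : ℕ) (htop : lowFlag T a (d + 1) = ⊤) (W : Submodule F V)
    (hs : ∀ k ≤ d + 1, W ≤ W ⊓ lowFlag T a k ⊔ W ⊓ upFlag T a k) :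
    ∀ v ∈ W, T v ∈ W := by
  have key : ∀ k ≤ d + 1, ∀ v ∈ W, v ∈ lowFlag T a k → T v ∈ W := by
    intro k
    induction k with
    | zero =>
      intro _ v _ hv
      have : v = 0 := by simpa [lowFlag] using hv
      simp [this]
    | succ k ih =>
      intro hk v hvW hv
      obtain ⟨x, hx, y, hy, rfl⟩ := Submodule.mem_sup.1 (hs k (by omega) hvW)
      rw [map_add]
      refine add_mem (ih (by omega) x hx.1 hx.2) ?_
      have hle : lowFlag T a (k + 1) ≤ lowFlag T a k ⊔ T.eigenspace (a k) := by
        refine iSup₂_le fun m hm => ?_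
        rcases (Nat.lt_succ_iff_lt_or_eq.1 hm) with h | rfl
        · exact (eig_le_low T a h).trans le_sup_left
        · exact le_sup_right
      obtain ⟨l, hl, e, he, hxy⟩ := Submodule.mem_sup.1 (hle hv)
      -- `y - e = l - x` lies in both the lower and the upper flag component, so `y = e`.
      have h0 : y - e = 0 := by
        refine (Submodule.disjoint_def.1 (disjoint_low_up T ha k)) _ ?_
          (sub_mem hy.2 (eig_le_up T a le_rfl he))
        have : y - e = l - x := by
          rw [sub_eq_sub_iff_add_eq_add, add_comm y x, hxy]
        rw [this]; exact sub_mem hl hx.2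
      rw [← sub_eq_zero.1 h0, Module.End.mem_eigenspace_iff] at he
      rw [he]
      exact W.smul_mem _ hy.1
  intro v hv
  exact key (d + 1) le_rfl v hv (htop ▸ Submodule.mem_top)

/-- Dimension count: if `W` splits along `L₀, U₀` and along `L₂, U₂`, where `U₀, L₂` are disjoint
and `L₀, U₂` are disjoint, then `W` also splits along `U₀, L₂` and along `L₀, U₂`. -/
lemma split_cross [FiniteDimensional F V] (W L₀ U₀ L₂ U₂ : Submodule F V)
    (h₀ : W ≤ W ⊓ L₀ ⊔ W ⊓ U₀) (h₂ : W ≤ W ⊓ L₂ ⊔ W ⊓ U₂)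
    (d1 : Disjoint U₀ L₂) (d3 : Disjoint L₀ U₂) :
    W ≤ W ⊓ U₀ ⊔ W ⊓ L₂ ∧ W ≤ W ⊓ L₀ ⊔ W ⊓ U₂ := by
  have e1 := Submodule.finrank_sup_add_finrank_inf_eq (W ⊓ U₀) (W ⊓ L₂)
  have e3 := Submodule.finrank_sup_add_finrank_inf_eq (W ⊓ L₀) (W ⊓ U₂)
  rw [(d1.mono inf_le_right inf_le_right).eq_bot, finrank_bot] at e1
  rw [(d3.mono inf_le_right inf_le_right).eq_bot, finrank_bot] at e3
  have f0 := (Submodule.finrank_mono h₀).trans (Submodule.finrank_add_le_finrank_add_finrank _ _)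
  have f2 := (Submodule.finrank_mono h₂).trans (Submodule.finrank_add_le_finrank_add_finrank _ _)
  have l1 : W ⊓ U₀ ⊔ W ⊓ L₂ ≤ W := sup_le inf_le_left inf_le_left
  have l3 : W ⊓ L₀ ⊔ W ⊓ U₂ ≤ W := sup_le inf_le_left inf_le_left
  have g1 := Submodule.finrank_mono l1
  have g3 := Submodule.finrank_mono l3
  exact ⟨(Submodule.eq_of_le_of_finrank_le l1 (by omega)).ge,
    (Submodule.eq_of_le_of_finrank_le l3 (by omega)).ge⟩

end Flags

/-! ### The q-Weyl relation -/

section QWeyl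

variable {F} {V : Type} [AddCommGroup V] [Module F V]

/-- The eigenvalues `q^(d-2n)`, continued to all `n : ℕ`. -/
def eigP (q : F) (d n : ℕ) : F := q ^ ((d : ℤ) - 2 * (n : ℤ))

/-- The inverse eigenvalues `q^(2n-d)`. -/
def eigR (q : F) (d n : ℕ) : F := q ^ (2 * (n : ℤ) - (d : ℤ))

lemma zpow_inj_of_not_root {q : F} (hq0 : q ≠ 0) (hq1 : ∀ n : ℕ, 0 < n → q ^ n ≠ 1) :
    Function.Injective fun n : ℤ => q ^ n := by
  have key : ∀ a b : ℤ, a < b → q ^ a ≠ q ^ b := by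
    intro a b hab h
    apply hq1 (b - a).toNat (by omega)
    rw [← zpow_natCast, Int.toNat_of_nonneg (by omega), zpow_sub₀ hq0, h,
      div_self (zpow_ne_zero _ hq0)]
  intro a b h
  rcases lt_trichotomy a b with hab | hab | hab
  · exact absurd h (key a b hab)
  · exact hab
  · exact absurd h.symm (key b a hab)

lemma eigP_inj {q : F} (hq0 : q ≠ 0) (hq1 : ∀ n : ℕ, 0 < n → q ^ n ≠ 1) (d : ℕ) :
    Function.Injective (eigP q d) := fun a b h => by
  have := zpow_inj_of_not_root hq0 hq1 h
  omega

lemma eigR_inj {q : F} (hq0 : q ≠ 0) (hq1 : ∀ n : ℕ, 0 < n → q ^ n ≠ 1) (d : ℕ) :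
    Function.Injective (eigR q d) := fun a b h => by
  have := zpow_inj_of_not_root hq0 hq1 h
  omega

lemma eigR_eq_eigP (q : F) {d n : ℕ} (h : n ≤ d) : eigR q d n = eigP q d (d - n) := by
  unfold eigR eigP
  congr 1
  omega

/-- If `q X Y - q⁻¹ Y X = q - q⁻¹`, then `Y - θ⁻¹` maps the `θ`-eigenspace of `X` into the
`q⁻²θ`-eigenspace. -/
lemma weyl_right {q : F} (hq0 : q ≠ 0) {X Y : Module.End F V}
    (h : q • (X * Y) - q⁻¹ • (Y * X) = (q - q⁻¹) • (1 : Module.End F V)) {θ : F} (hθ : θ ≠ 0)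
    {v : V} (hv : X v = θ • v) : X (Y v - θ⁻¹ • v) = (q⁻¹ * q⁻¹ * θ) • (Y v - θ⁻¹ • v) := by
  have h1 := congrArg (fun f : Module.End F V => q⁻¹ • f v) h
  simp only [LinearMap.sub_apply, LinearMap.smul_apply, Module.End.mul_apply, hv, map_smul,
    Module.End.one_apply, smul_sub, smul_smul, inv_mul_cancel₀ hq0, one_smul] at h1
  rw [map_sub, map_smul, hv, eq_add_of_sub_eq h1]
  match_scalars <;> field_simp
  ring

/-- If `q X Y - q⁻¹ Y X = q - q⁻¹`, then `X - θ⁻¹` maps the `θ`-eigenspace of `Y` into the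
`q²θ`-eigenspace. -/
lemma weyl_left {q : F} (hq0 : q ≠ 0) {X Y : Module.End F V}
    (h : q • (X * Y) - q⁻¹ • (Y * X) = (q - q⁻¹) • (1 : Module.End F V)) {θ : F} (hθ : θ ≠ 0)
    {v : V} (hv : Y v = θ • v) : Y (X v - θ⁻¹ • v) = (q * q * θ) • (X v - θ⁻¹ • v) := by
  -- Exchanging `X` and `Y` amounts to replacing `q` by `q⁻¹`.
  have h' : q⁻¹ • (Y * X) - q⁻¹⁻¹ • (X * Y) = (q⁻¹ - q⁻¹⁻¹) • (1 : Module.End F V) := by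
    rw [inv_inv, ← neg_sub q q⁻¹, neg_smul, ← h]
    abel
  simpa using weyl_right (inv_ne_zero hq0) h' hθ hv

/-- For a pair satisfying the `q`-Weyl relation, the upper flag of `X` is the lower flag
of `Y`. -/
lemma upFlag_eq_lowFlag {q : F} (hq0 : q ≠ 0) (hq1 : ∀ n : ℕ, 0 < n → q ^ n ≠ 1) (d : ℕ)
    {X Y : Module.End F V}
    (h : q • (X * Y) - q⁻¹ • (Y * X) = (q - q⁻¹) • (1 : Module.End F V))
    (hX : ∀ θ, X.eigenspace θ ≠ ⊥ → ∃ n ≤ d, θ = eigP q d n)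
    (hY : ∀ θ, Y.eigenspace θ ≠ ⊥ → ∃ n ≤ d, θ = eigP q d n) {k : ℕ} (hk : k ≤ d + 1) :
    upFlag X (eigP q d) k = lowFlag Y (eigP q d) (d + 1 - k) := by
  have hXd : ∀ n, d < n → X.eigenspace (eigP q d n) = ⊥ := by
    intro n hn
    by_contra hne
    obtain ⟨m, hm, e⟩ := hX _ hne
    have := eigP_inj hq0 hq1 d e
    omega
  have hYd : ∀ n, d < n → Y.eigenspace (eigR q d n) = ⊥ := by
    intro n hn
    by_contra hne
    obtain ⟨m, hm, e⟩ := hY _ hne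
    have : (2 * (n : ℤ) - d) = (d : ℤ) - 2 * m := zpow_inj_of_not_root hq0 hq1 e
    omega
  have hinv : ∀ n, (eigP q d n)⁻¹ = eigR q d n := fun n => by
    unfold eigP eigR; rw [← zpow_neg]; congr 1; ring
  have hinv' : ∀ n, (eigR q d n)⁻¹ = eigP q d n := fun n => by rw [← hinv, inv_inv]
  have hP : ∀ n, eigP q d (n + 1) = q⁻¹ * q⁻¹ * eigP q d n := fun n => by
    unfold eigP
    rw [← zpow_neg_one, ← zpow_add₀ hq0, ← zpow_add₀ hq0]
    congr 1; push_cast; ring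
  have hR : ∀ n, eigR q d (n + 1) = q * q * eigR q d n := fun n => by
    unfold eigR
    rw [mul_assoc, ← zpow_one_add₀ hq0, ← zpow_one_add₀ hq0]
    congr 1; push_cast; ring
  have step1 : ∀ n, ∀ v ∈ X.eigenspace (eigP q d n),
      Y v - eigR q d n • v ∈ X.eigenspace (eigP q d (n + 1)) := by
    intro n v hv
    rw [Module.End.mem_eigenspace_iff] at hv ⊢
    rw [hP, ← hinv]
    exact weyl_right hq0 h (zpow_ne_zero _ hq0) hv
  have step2 : ∀ n, ∀ v ∈ Y.eigenspace (eigR q d n),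
      X v - eigP q d n • v ∈ Y.eigenspace (eigR q d (n + 1)) := by
    intro n v hv
    rw [Module.End.mem_eigenspace_iff] at hv ⊢
    rw [hR, ← hinv']
    exact weyl_left hq0 h (zpow_ne_zero _ hq0) hv
  have e1 : upFlag X (eigP q d) k = upFlag Y (eigR q d) k :=
    le_antisymm (upFlag_le_upFlag X Y _ (eigR_inj hq0 hq1 d) d hXd step1 k)
      (upFlag_le_upFlag Y X _ (eigP_inj hq0 hq1 d) d hYd step2 k)
  rw [e1]
  apply le_antisymm
  · refine iSup₂_le fun m hm => ?_
    rcases le_or_gt m d with hmd | hmd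
    · rw [eigR_eq_eigP q hmd]
      exact eig_le_low Y (eigP q d) (by omega)
    · rw [hYd m hmd]; exact bot_le
  · refine iSup₂_le fun m hm => ?_
    have : eigP q d m = eigR q d (d - m) := by
      rw [eigR_eq_eigP q (by omega)]; congr 1; omega
    rw [this]
    exact eig_le_up Y (eigR q d) (by omega)

end QWeyl

/-! ### The algebra `□_q` -/

lemma bx_weyl {F : Type} [Field F] (q : F) {V : Type} [AddCommGroup V] [Module F V]
    (π : BoxQ F q →ₐ[F] Module.End F V) (i j : ZMod 4) (hij : i + 1 = j) :
    q • (π (bx F q i) * π (bx F q j)) - q⁻¹ • (π (bx F q j) * π (bx F q i)) =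
      (q - q⁻¹) • (1 : Module.End F V) := by
  subst hij
  have h := congrArg π (RingQuot.mkAlgHom_rel F (BoxRel.rel1 (q := q) i))
  simp only [map_sub, map_smul, map_mul, map_one] at h
  exact h

lemma box_invariant {F : Type} [Field F] (q : F) {V : Type} [AddCommGroup V] [Module F V]
    (π : BoxQ F q →ₐ[F] Module.End F V) (W : Submodule F V)
    (h : ∀ i, ∀ v ∈ W, π (bx F q i) v ∈ W) (a : BoxQ F q) : ∀ v ∈ W, π a v ∈ W := by
  obtain ⟨a, rfl⟩ := RingQuot.mkAlgHom_surjective F (BoxRel F q) a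
  induction a using FreeAlgebra.induction with
  | grade0 r =>
    intro v hv
    rw [AlgHom.commutes, AlgHom.commutes, Module.algebraMap_end_apply]
    exact W.smul_mem r hv
  | grade1 i => exact h i
  | mul a b ha hb =>
    intro v hv
    rw [map_mul, map_mul, Module.End.mul_apply]
    exact ha _ (hb v hv)
  | add a b ha hb =>
    intro v hv
    rw [map_add, map_add, LinearMap.add_apply]
    exact add_mem (ha v hv) (hb v hv)

lemma not_nilpotent_of_eig {F : Type} [Field F] {V : Type} [AddCommGroup V] [Module F V]
    (T : Module.End F V) {θ : F} (hθ : θ ≠ 0) (h : T.eigenspace θ ≠ ⊥) : ¬ IsNilpotent T := by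
  rintro ⟨n, hn⟩
  obtain ⟨v, hv⟩ := Module.End.HasEigenvalue.exists_hasEigenvector (f := T) (μ := θ) h
  have := hv.pow_apply n
  rw [hn, LinearMap.zero_apply] at this
  exact smul_ne_zero (pow_ne_zero n hθ) hv.2 this.symm


/-- The pullback along `κ : U_q^+ → □_q` of a type-1 irreducible `□_q`-module of
diameter `d` is a NonNil irreducible `U_q^+`-module of type `(1,1)` and diameter `d`. -/
theorem stmt10 [IsAlgClosed F] [CharZero F] (q : F) (hq0 : q ≠ 0)
    (hq1 : ∀ n : ℕ, 0 < n → q ^ n ≠ 1)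
    (V : Type) [AddCommGroup V] [Module F V] [FiniteDimensional F V]
    (π : BoxQ F q →ₐ[F] Module.End F V) (hirr : IsIrrep F π)
    (d : ℕ) (hT : Type1Diam F q π d)
    (κ : Uqp F q →ₐ[F] BoxQ F q)
    (hκx : κ (ux F q) = bx F q 0) (hκy : κ (uy F q) = bx F q 2) :
    IsIrrep F (π.comp κ) ∧
    ¬ IsNilpotent ((π.comp κ) (ux F q)) ∧ ¬ IsNilpotent ((π.comp κ) (uy F q)) ∧
    SemisimpleOn F ((π.comp κ) (ux F q)) ∧ SemisimpleOn F ((π.comp κ) (uy F q)) ∧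
    EigSet F ((π.comp κ) (ux F q)) =
      {θ : F | ∃ n : ℕ, n ≤ d ∧ θ = q ^ ((d : ℤ) - 2 * (n : ℤ))} ∧
    EigSet F ((π.comp κ) (uy F q)) =
      {θ : F | ∃ n : ℕ, n ≤ d ∧ θ = q ^ ((d : ℤ) - 2 * (n : ℤ))} := by
  have hx : (π.comp κ) (ux F q) = π (bx F q 0) := by rw [AlgHom.comp_apply, hκx]
  have hy : (π.comp κ) (uy F q) = π (bx F q 2) := by rw [AlgHom.comp_apply, hκy]
  have hnil : ∀ i, ¬ IsNilpotent (π (bx F q i)) := fun i => by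
    have hmem : q ^ ((d : ℤ) - 2 * ((0 : ℕ) : ℤ)) ∈ EigSet F (π (bx F q i)) := by
      rw [(hT i).2]
      exact ⟨0, Nat.zero_le d, rfl⟩
    exact not_nilpotent_of_eig _ (zpow_ne_zero _ hq0) hmem
  refine ⟨⟨hirr.1, fun W hW => hirr.2 W ?_⟩, ?_⟩
  · have hW0 : ∀ v ∈ W, π (bx F q 0) v ∈ W := fun v hv => hx ▸ hW (ux F q) v hv
    have hW2 : ∀ v ∈ W, π (bx F q 2) v ∈ W := fun v hv => hy ▸ hW (uy F q) v hv
    have hP := eigP_inj hq0 hq1 d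
    have hE : ∀ i θ, (π (bx F q i)).eigenspace θ ≠ ⊥ → ∃ n ≤ d, θ = eigP q d n := by
      intro i θ hθ
      have hmem : θ ∈ EigSet F (π (bx F q i)) := hθ
      rw [(hT i).2] at hmem
      exact hmem
    have hE' : ∀ i θ, (π (bx F q i)).eigenspace θ ≠ ⊥ → ∃ n, θ = eigP q d n := fun i θ hθ =>
      let ⟨n, _, e⟩ := hE i θ hθ
      ⟨n, e⟩
    have htop : ∀ i, lowFlag (π (bx F q i)) (eigP q d) (d + 1) = ⊤ := by
      intro i
      rw [eq_top_iff, ← (hT i).1]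
      refine iSup_le fun θ => ?_
      by_cases hθ : (π (bx F q i)).eigenspace θ = ⊥
      · rw [hθ]; exact bot_le
      · obtain ⟨n, hn, rfl⟩ := hE i θ hθ
        exact eig_le_low _ (eigP q d) (by omega)
    have hfl : ∀ i j : ZMod 4, i + 1 = j → ∀ k ≤ d + 1,
        upFlag (π (bx F q i)) (eigP q d) k = lowFlag (π (bx F q j)) (eigP q d) (d + 1 - k) :=
      fun i j hij k hk =>
        upFlag_eq_lowFlag hq0 hq1 d (bx_weyl q π i j hij) (hE i) (hE j) hk
    have hcross : ∀ k ≤ d + 1,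
        (W ≤ W ⊓ lowFlag (π (bx F q 1)) (eigP q d) k ⊔
          W ⊓ upFlag (π (bx F q 1)) (eigP q d) k) ∧
        (W ≤ W ⊓ lowFlag (π (bx F q 3)) (eigP q d) k ⊔
          W ⊓ upFlag (π (bx F q 3)) (eigP q d) k) := by
      intro k hk
      have hk' : d + 1 - k ≤ d + 1 := Nat.sub_le _ _
      have hkk : d + 1 - (d + 1 - k) = k := Nat.sub_sub_self hk
      have a1 := hfl 0 1 (by decide) _ hk'
      have a2 := hfl 1 2 (by decide) k hk
      have a3 := hfl 2 3 (by decide) _ hk'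
      have a4 := hfl 3 0 (by decide) k hk
      rw [hkk] at a1 a3
      have hc := split_cross W _ _ _ _
        (split_of_invariant _ _ (hT 0).1 (hE' 0) W hW0 (d + 1 - k))
        (split_of_invariant _ _ (hT 2).1 (hE' 2) W hW2 (d + 1 - k))
        (by rw [a1, ← a2]; exact disjoint_low_up _ hP k)
        (by rw [a3, ← a4]; exact (disjoint_low_up _ hP k).symm)
      rw [a1, ← a2, a3, ← a4] at hc
      exact ⟨hc.1, hc.2.trans (sup_comm _ _).le⟩
    have hW1 := invariant_of_split _ hP d (htop 1) W fun k hk => (hcross k hk).1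
    have hW3 := invariant_of_split _ hP d (htop 3) W fun k hk => (hcross k hk).2
    apply box_invariant q π W
    intro i
    fin_cases i
    · exact hW0
    · exact hW1
    · exact hW2
    · exact hW3
  · rw [hx, hy]
    exact ⟨hnil 0, hnil 2, (hT 0).1, (hT 2).1, (hT 0).2, (hT 2).2⟩
end
end

section
/- Let V be a NonNil finite-dimensional irreducible U_q^+-module of type (1,1). Then there exists a unique □_q-module structure on V such that x_0 acts as the standard generator x and x_2 acts as the standard generator y. Moreover this □_q-module structure is irreducible of type 1. -/
/-!
Write `X`, `Y` for the actions of `x`, `y`, and let `V n`, `V* n` be their eigenspaces for the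
eigenvalue `θ n = q ^ (d - 2 n)`. The cubic relations imply that `Y` maps `V n` into
`V (n-1) + V n + V (n+1)` and that `X` acts likewise on the `V* n` (`Serre.tri`).

Consider the increasing flag `Lo Y i = ∑_{n ≤ i} V* n` and the decreasing flag
`Hi X j = ∑_{n ≥ j} V n`. For fixed `r` the sum over `i` of `Lo Y i ⊓ Hi X (i + r)` is stable under
`X` and `Y`; by irreducibility it is `0` for `r > 0` and all of `V` for `r = 0`. Hence the two flags
are opposite (`oppFlags`) and `V` is the direct sum of the subspaces `U n = Lo Y n ⊓ Hi X n` (the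
split decomposition), with `(X - θ n) U n ⊆ U (n+1)` and `(Y - θ n) U n ⊆ U (n-1)`.

An operator `Z` satisfying the relations required of `x₁` with `X = x₀` and `Y = x₂` must act on
`U n` as `(θ n)⁻¹`: the relations force `(Z - (θ n)⁻¹) V n ⊆ V (n+1)` and
`(Z - (θ n)⁻¹) V* n ⊆ V* (n-1)`, so `(Z - (θ n)⁻¹) U n ⊆ Lo Y (n-1) ⊓ Hi X (n+1) = 0`
(`diag_of_rel`). Conversely the operator so defined satisfies both relations (`exists_mid`).
Exchanging `X` and `Y` gives existence and uniqueness of the action `W` of `x₃`.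

The cubic relations between `Z` and `W` hold because `Z` moves each of the flags `Lo X`, `Hi Y` that
define the split decomposition for `W` by at most one step, so it acts tridiagonally on it
(`serre_mid`). The eigenvalues of `Z` are the `(θ n)⁻¹ = θ (d - n)`, `0 ≤ n ≤ d`, since each such
`U n` is nonzero (`type_mid`), and irreducibility is inherited from `U_q^+`.
-/

noncomputable section

open FreeAlgebra

variable (F : Type) [Field F]

section Aux

variable {F}
variable {V : Type} [AddCommGroup V] [Module F V]

/-! ### Opposite flags -/

/-- An increasing flag `H` and a decreasing flag `G`, indexed by `ℤ`, that are opposite: `H i` and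
`G j` meet trivially for `i < j`, and the subspaces `H n ⊓ G n` span the whole space. -/
structure OppFlags (H G : ℤ → Submodule F V) : Prop where
  mono : Monotone H
  anti : Antitone G
  bot : ∀ i j, i < j → H i ⊓ G j = ⊥
  top : ⨆ n, H n ⊓ G n = ⊤

namespace OppFlags

variable {H G : ℤ → Submodule F V}

lemma eq_zero (h : OppFlags H G) {i j : ℤ} (hij : i < j) {v : V} (h1 : v ∈ H i) (h2 : v ∈ G j) :
    v = 0 := by
  have : v ∈ H i ⊓ G j := ⟨h1, h2⟩
  rwa [h.bot i j hij, Submodule.mem_bot] at this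

lemma indep (h : OppFlags H G) : iSupIndep (fun n => H n ⊓ G n) := by
  intro n
  have hle : (⨆ m, ⨆ (_ : m ≠ n), H m ⊓ G m) ≤ H (n - 1) ⊔ G (n + 1) := by
    refine iSup₂_le fun m hm => ?_
    rcases lt_or_gt_of_ne hm with hm | hm
    · exact (inf_le_left.trans (h.mono (by omega))).trans le_sup_left
    · exact (inf_le_right.trans (h.anti (by omega))).trans le_sup_right
  refine Disjoint.mono_right hle ?_
  rw [Submodule.disjoint_def]
  rintro v ⟨hv1, hv2⟩ hv3
  obtain ⟨a, ha, b, hb, rfl⟩ := Submodule.mem_sup.1 hv3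
  have hb0 : b = 0 := by
    refine h.eq_zero (i := n) (j := n + 1) (by omega) ?_ hb
    have := (H n).sub_mem hv1 (h.mono (by omega : n - 1 ≤ n) ha)
    simpa using this
  subst hb0
  rw [add_zero] at hv2 ⊢
  exact h.eq_zero (by omega) ha hv2

lemma le_sup_pred (h : OppFlags H G) (n : ℤ) : H n ≤ (H n ⊓ G n) ⊔ H (n - 1) := by
  have htop : (⊤ : Submodule F V) ≤ ((H n ⊓ G n) ⊔ H (n - 1)) ⊔ G (n + 1) := by
    rw [← h.top]
    refine iSup_le fun m => ?_
    rcases lt_trichotomy m n with hm | rfl | hm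
    · exact ((inf_le_left.trans (h.mono (by omega))).trans le_sup_right).trans le_sup_left
    · exact le_sup_left.trans le_sup_left
    · exact (inf_le_right.trans (h.anti (by omega))).trans le_sup_right
  intro v hv
  obtain ⟨a, ha, b, hb, rfl⟩ := Submodule.mem_sup.1 (htop (Submodule.mem_top (x := v)))
  have haH : a ∈ H n := (sup_le inf_le_left (h.mono (by omega))) ha
  have hb0 : b = 0 := by
    refine h.eq_zero (i := n) (j := n + 1) (by omega) ?_ hb
    simpa using (H n).sub_mem hv haH
  simpa [hb0] using ha

lemma inf_le_step (h : OppFlags H G) {i j : ℤ} (hij : j ≤ i) :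
    H i ⊓ G j ≤ (H i ⊓ G i) ⊔ (H (i - 1) ⊓ G j) := by
  rintro v ⟨h1, h2⟩
  obtain ⟨a, ha, b, hb, rfl⟩ := Submodule.mem_sup.1 (h.le_sup_pred i h1)
  refine Submodule.add_mem_sup ha ⟨hb, ?_⟩
  simpa using (G j).sub_mem h2 (h.anti hij ha.2)

/-- Three consecutive components account for `H (n + 1) ⊓ G (n - 1)`; this is what makes the
action of `x₁` on the eigenspaces of `x₃` tridiagonal. -/
lemma inf_le_three (h : OppFlags H G) (n : ℤ) :
    H (n + 1) ⊓ G (n - 1) ≤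
      (H (n + 1) ⊓ G (n + 1)) ⊔ ((H n ⊓ G n) ⊔ (H (n - 1) ⊓ G (n - 1))) := by
  refine (h.inf_le_step (by omega)).trans (sup_le_sup_left ?_ _)
  rw [add_sub_cancel_right]
  exact h.inf_le_step (by omega)

end OppFlags

lemma exists_diag {U : ℤ → Submodule F V} (hi : iSupIndep U) (ht : ⨆ n, U n = ⊤) (c : ℤ → F) :
    ∃ Z : Module.End F V, ∀ n, ∀ u ∈ U n, Z u = c n • u := by
  classical
  have hint := DirectSum.isInternal_submodule_of_iSupIndep_of_iSup_eq_top hi ht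
  let e := LinearEquiv.ofBijective (DirectSum.coeLinearMap U) hint
  refine ⟨(DirectSum.toModule F ℤ V (fun n => c n • (U n).subtype)) ∘ₗ e.symm.toLinearMap,
    fun n u hu => ?_⟩
  have he : e.symm u = DirectSum.lof F ℤ (fun n => U n) n ⟨u, hu⟩ := by
    rw [LinearEquiv.symm_apply_eq]
    exact (DirectSum.coeLinearMap_lof U n ⟨u, hu⟩).symm
  simp [he]

lemma ext_of_iSup {U : ℤ → Submodule F V} (ht : ⨆ n, U n = ⊤) {f g : Module.End F V}
    (h : ∀ n, ∀ u ∈ U n, f u = g u) : f = g := by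
  have : (⨆ n, U n) ≤ LinearMap.eqLocus f g := iSup_le fun n u hu => h n u hu
  rw [ht] at this
  ext v
  exact this (Submodule.mem_top (x := v))

/-! ### Eigenspaces and the flags they generate -/

/-- The eigenvalue `q ^ (d - 2 n)`, indexed by all integers `n`. -/
def th (q : F) (d : ℕ) (n : ℤ) : F := q ^ ((d : ℤ) - 2 * n)

/-- The eigenspace of `f` for the eigenvalue `th q d n`. -/
def Ef (q : F) (d : ℕ) (f : Module.End F V) (n : ℤ) : Submodule F V :=
  Module.End.eigenspace f (th q d n)

/-- The sum of the eigenspaces of `f` with index at most `i`. -/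
def Lo (q : F) (d : ℕ) (f : Module.End F V) (i : ℤ) : Submodule F V :=
  ⨆ n : {n : ℤ // n ≤ i}, Ef q d f n

/-- The sum of the eigenspaces of `f` with index at least `j`. -/
def Hi (q : F) (d : ℕ) (f : Module.End F V) (j : ℤ) : Submodule F V :=
  ⨆ n : {n : ℤ // j ≤ n}, Ef q d f n

/-- `f` is diagonalizable with set of eigenvalues `{th q d n : 0 ≤ n ≤ d}`. -/
structure Good (q : F) (d : ℕ) (f : Module.End F V) : Prop where
  top : ⨆ n, Ef q d f n = ⊤
  ne : ∀ n : ℤ, 0 ≤ n → n ≤ d → Ef q d f n ≠ ⊥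
  bot : ∀ n : ℤ, (n < 0 ∨ (d : ℤ) < n) → Ef q d f n = ⊥

variable {q : F} {d : ℕ} {X Y Z W f : Module.End F V}

lemma mem_Ef {n : ℤ} {v : V} : v ∈ Ef q d f n ↔ f v = th q d n • v :=
  Module.End.mem_eigenspace_iff

lemma th_ne (hq0 : q ≠ 0) (n : ℤ) : th q d n ≠ 0 := zpow_ne_zero _ hq0

lemma th_succ (hq0 : q ≠ 0) (n : ℤ) : th q d (n + 1) = (q⁻¹) ^ 2 * th q d n := by
  unfold th
  rw [show (d : ℤ) - 2 * (n + 1) = -2 + (d - 2 * n) by ring, zpow_add₀ hq0]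
  congr 1
  rw [zpow_neg, inv_pow]; norm_cast

lemma th_pred (hq0 : q ≠ 0) (n : ℤ) : th q d (n - 1) = q ^ 2 * th q d n := by
  unfold th
  rw [show (d : ℤ) - 2 * (n - 1) = 2 + (d - 2 * n) by ring, zpow_add₀ hq0]
  norm_cast

lemma zpow_inj (hq0 : q ≠ 0) (hq1 : ∀ n : ℕ, 0 < n → q ^ n ≠ 1) :
    Function.Injective (fun n : ℤ => q ^ n) := by
  have key : ∀ a b : ℤ, a < b → q ^ a ≠ q ^ b := by
    intro a b hab h
    obtain ⟨k, hk⟩ := Int.eq_ofNat_of_zero_le (by omega : 0 ≤ b - a)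
    refine hq1 k (by omega) ?_
    have : q ^ (b - a) = 1 := by
      rw [zpow_sub₀ hq0, h, div_self (zpow_ne_zero _ hq0)]
    rwa [hk, zpow_natCast] at this
  intro a b h
  by_contra hne
  rcases lt_or_gt_of_ne hne with h' | h'
  · exact key a b h' h
  · exact key b a h' h.symm

lemma th_inj (hq0 : q ≠ 0) (hq1 : ∀ n : ℕ, 0 < n → q ^ n ≠ 1) :
    Function.Injective (th q d) := by
  intro a b h
  have := zpow_inj hq0 hq1 h
  omega

lemma Lo_mono : Monotone (Lo q d f) := fun _ j hij =>
  iSup_le fun n => le_iSup_of_le (⟨n.1, n.2.trans hij⟩ : {n : ℤ // n ≤ j}) le_rfl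

lemma Hi_anti : Antitone (Hi q d f) := fun i _ hij =>
  iSup_le fun n => le_iSup_of_le (⟨n.1, hij.trans n.2⟩ : {n : ℤ // i ≤ n}) le_rfl

lemma Ef_le_Lo {n i : ℤ} (h : n ≤ i) : Ef q d f n ≤ Lo q d f i :=
  le_iSup_of_le (⟨n, h⟩ : {n : ℤ // n ≤ i}) le_rfl

lemma Ef_le_Hi {n j : ℤ} (h : j ≤ n) : Ef q d f n ≤ Hi q d f j :=
  le_iSup_of_le (⟨n, h⟩ : {n : ℤ // j ≤ n}) le_rfl

lemma map_Lo {i : ℤ} {S : Submodule F V} {g : Module.End F V}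
    (h : ∀ n ≤ i, ∀ v ∈ Ef q d f n, g v ∈ S) : ∀ v ∈ Lo q d f i, g v ∈ S := by
  have : Lo q d f i ≤ S.comap g := iSup_le fun n v hv => h n.1 n.2 v hv
  exact fun v hv => this hv

lemma map_Hi {j : ℤ} {S : Submodule F V} {g : Module.End F V}
    (h : ∀ n, j ≤ n → ∀ v ∈ Ef q d f n, g v ∈ S) : ∀ v ∈ Hi q d f j, g v ∈ S := by
  have : Hi q d f j ≤ S.comap g := iSup_le fun n v hv => h n.1 n.2 v hv
  exact fun v hv => this hv

lemma Ef_indep (hth : Function.Injective (th q d)) : iSupIndep (Ef q d f) :=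
  (Module.End.eigenspaces_iSupIndep f).comp hth

lemma disjoint_Lo_Hi (hth : Function.Injective (th q d)) {i j : ℤ} (hij : i < j) :
    Disjoint (Lo q d f i) (Hi q d f j) := by
  have := (Ef_indep (f := f) hth).disjoint_biSup_biSup (s := Set.Iic i) (t := Set.Ici j)
    (Set.disjoint_left.2 fun n h1 h2 => by
      have h1' : n ≤ i := h1
      have h2' : j ≤ n := h2
      omega)
  simpa [Lo, Hi, iSup_subtype] using this

lemma Good.Hi_zero (h : Good q d f) : Hi q d f 0 = ⊤ := by
  rw [eq_top_iff, ← h.top]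
  refine iSup_le fun n => ?_
  by_cases hn : 0 ≤ n
  · exact Ef_le_Hi hn
  · rw [h.bot n (by omega)]; exact bot_le

lemma Good.Hi_bot (h : Good q d f) {n : ℤ} (hn : (d : ℤ) < n) : Hi q d f n = ⊥ := by
  rw [eq_bot_iff]
  refine iSup_le fun m => ?_
  rw [h.bot m.1 (Or.inr (lt_of_lt_of_le hn m.2))]

lemma Good.Lo_bot (h : Good q d f) {n : ℤ} (hn : n < 0) : Lo q d f n = ⊥ := by
  rw [eq_bot_iff]
  refine iSup_le fun m => ?_
  rw [h.bot m.1 (Or.inl (lt_of_le_of_lt m.2 hn))]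

lemma Good.not_le_Lo_pred (hth : Function.Injective (th q d)) (h : Good q d f) {n : ℤ}
    (h0 : 0 ≤ n) (hd : n ≤ d) : ¬ Lo q d f n ≤ Lo q d f (n - 1) := by
  intro hle
  refine h.ne n h0 hd ?_
  have := (disjoint_Lo_Hi (f := f) hth (by omega : n - 1 < n)).mono
    ((Ef_le_Lo (le_refl n)).trans hle) (Ef_le_Hi (le_refl n))
  exact disjoint_self.1 this

lemma sub_mem_Hi {n : ℤ} : ∀ v ∈ Hi q d f n,
    (f - th q d n • 1 : Module.End F V) v ∈ Hi q d f (n + 1) := by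
  refine map_Hi fun m hm v hv => ?_
  have h1 : (f - th q d n • 1 : Module.End F V) v = (th q d m - th q d n) • v := by
    simp [mem_Ef.1 hv, sub_smul]
  rw [h1]
  rcases eq_or_lt_of_le hm with rfl | hm
  · simp
  · exact Submodule.smul_mem _ _ (Ef_le_Hi (by omega) hv)

lemma sub_mem_Lo {n : ℤ} : ∀ v ∈ Lo q d f n,
    (f - th q d n • 1 : Module.End F V) v ∈ Lo q d f (n - 1) := by
  refine map_Lo fun m hm v hv => ?_
  have h1 : (f - th q d n • 1 : Module.End F V) v = (th q d m - th q d n) • v := by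
    simp [mem_Ef.1 hv, sub_smul]
  rw [h1]
  rcases eq_or_lt_of_le hm with rfl | hm
  · simp
  · exact Submodule.smul_mem _ _ (Ef_le_Lo (by omega) hv)

/-! ### The cubic relation and tridiagonal action -/

/-- The cubic `q`-Serre relation between `X` and `Y`, of degree three in `X`. -/
def Serre (q : F) (X Y : Module.End F V) : Prop :=
  X ^ 3 * Y + ((q ^ 3 - (q⁻¹) ^ 3) / (q - q⁻¹)) • (X * Y * X ^ 2) =
    ((q ^ 3 - (q⁻¹) ^ 3) / (q - q⁻¹)) • (X ^ 2 * Y * X) + Y * X ^ 3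

lemma qint_three (hq0 : q ≠ 0) (hq2 : q ^ 2 ≠ 1) :
    (q ^ 3 - (q⁻¹) ^ 3) / (q - q⁻¹) = q ^ 2 + 1 + (q⁻¹) ^ 2 := by
  have : q - q⁻¹ ≠ 0 := by
    intro h
    apply hq2
    rw [sub_eq_zero] at h
    rw [pow_two]
    nth_rewrite 2 [h]
    exact mul_inv_cancel₀ hq0
  rw [div_eq_iff this]
  have h1 : q * q⁻¹ = 1 := mul_inv_cancel₀ hq0
  linear_combination (q - q⁻¹) * h1

/-- Lagrange interpolation: a vector killed by a cubic in `f` with distinct roots is a sum of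
eigenvectors of `f` for these roots. -/
lemma mem_of_cubic {a b c : F} (hab : a ≠ b) (hac : a ≠ c) (hbc : b ≠ c) {w : V}
    (h : f (f (f w)) - (a + b + c) • f (f w) + (a * b + a * c + b * c) • f w
      - (a * b * c) • w = 0) :
    w ∈ Module.End.eigenspace f a ⊔ (Module.End.eigenspace f b ⊔ Module.End.eigenspace f c) := by
  have hf : f (f (f w)) = (a + b + c) • f (f w) - (a * b + a * c + b * c) • f w
      + (a * b * c) • w := by
    rw [← sub_eq_zero, ← h]; abel
  have hab' := sub_ne_zero.2 hab
  have hac' := sub_ne_zero.2 hac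
  have hbc' := sub_ne_zero.2 hbc
  have key : ∀ a b c : F, f (f (f w)) = (a + b + c) • f (f w) - (a * b + a * c + b * c) • f w
      + (a * b * c) • w → ∀ s : F,
      s • (f (f w) - (b + c) • f w + (b * c) • w) ∈ Module.End.eigenspace f a := by
    intro a b c hf s
    refine Submodule.smul_mem _ _ ?_
    rw [Module.End.mem_eigenspace_iff]
    simp only [map_add, map_sub, map_smul, hf]
    module
  have e1 := key a b c hf ((a - b) * (a - c))⁻¹
  have e2 := key b a c (by rw [hf]; module) (-((a - b) * (b - c))⁻¹)
  have e3 := key c a b (by rw [hf]; module) (((a - c) * (b - c))⁻¹)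
  have := Submodule.add_mem_sup e1 (Submodule.add_mem_sup e2 e3)
  convert this using 1
  match_scalars <;> field_simp <;> ring

lemma Serre.tri (hq0 : q ≠ 0) (hq1 : ∀ n : ℕ, 0 < n → q ^ n ≠ 1)
    (hS : Serre q X Y) {n : ℤ} {v : V} (hv : v ∈ Ef q d X n) :
    Y v ∈ Ef q d X (n + 1) ⊔ (Ef q d X n ⊔ Ef q d X (n - 1)) := by
  have hth := th_inj (d := d) hq0 hq1
  refine mem_of_cubic (fun h => by have := hth h; omega) (fun h => by have := hth h; omega)
    (fun h => by have := hth h; omega) ?_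
  have hv' := mem_Ef.1 hv
  have h := LinearMap.congr_fun hS v
  rw [qint_three hq0 (hq1 2 (by norm_num))] at h
  simp only [pow_succ, pow_zero, one_mul, LinearMap.add_apply, LinearMap.smul_apply,
    Module.End.mul_apply, hv', map_smul] at h
  rw [th_succ hq0, th_pred hq0]
  have h1 : q * q⁻¹ = 1 := mul_inv_cancel₀ hq0
  rw [← sub_eq_zero] at h
  rw [← h]
  match_scalars
  · ring
  · ring
  · linear_combination (q * q⁻¹ + 1) * (th q d n) ^ 2 * h1
  · linear_combination (- (q * q⁻¹ + 1)) * (th q d n) ^ 3 * h1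

lemma Serre.map_Lo (hq0 : q ≠ 0) (hq1 : ∀ n : ℕ, 0 < n → q ^ n ≠ 1)
    (hS : Serre q X Y) {n : ℤ} : ∀ v ∈ Lo q d X n, Y v ∈ Lo q d X (n + 1) :=
  _root_.map_Lo fun m hm v hv =>
    (sup_le (Ef_le_Lo (by omega)) (sup_le (Ef_le_Lo (by omega)) (Ef_le_Lo (by omega))) :
      _ ≤ Lo q d X (n + 1)) (hS.tri hq0 hq1 hv)

lemma Serre.map_Hi (hq0 : q ≠ 0) (hq1 : ∀ n : ℕ, 0 < n → q ^ n ≠ 1)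
    (hS : Serre q X Y) {n : ℤ} : ∀ v ∈ Hi q d X n, Y v ∈ Hi q d X (n - 1) :=
  _root_.map_Hi fun m hm v hv =>
    (sup_le (Ef_le_Hi (by omega)) (sup_le (Ef_le_Hi (by omega)) (Ef_le_Hi (by omega))) :
      _ ≤ Hi q d X (n - 1)) (hS.tri hq0 hq1 hv)

/-! ### The split decomposition -/

lemma split_X (hq0 : q ≠ 0) (hq1 : ∀ n : ℕ, 0 < n → q ^ n ≠ 1)
    (hYX : Serre q Y X) {i j : ℤ} {v : V} (hv : v ∈ Lo q d Y i ⊓ Hi q d X j) :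
    (X - th q d j • 1 : Module.End F V) v ∈ Lo q d Y (i + 1) ⊓ Hi q d X (j + 1) := by
  refine ⟨?_, sub_mem_Hi v hv.2⟩
  simp only [LinearMap.sub_apply, LinearMap.smul_apply, Module.End.one_apply]
  exact Submodule.sub_mem _ (hYX.map_Lo hq0 hq1 v hv.1)
    (Submodule.smul_mem _ _ (Lo_mono (by omega) hv.1))

lemma split_Y (hq0 : q ≠ 0) (hq1 : ∀ n : ℕ, 0 < n → q ^ n ≠ 1)
    (hXY : Serre q X Y) {i j : ℤ} {v : V} (hv : v ∈ Lo q d Y i ⊓ Hi q d X j) :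
    (Y - th q d i • 1 : Module.End F V) v ∈ Lo q d Y (i - 1) ⊓ Hi q d X (j - 1) := by
  refine ⟨sub_mem_Lo v hv.1, ?_⟩
  simp only [LinearMap.sub_apply, LinearMap.smul_apply, Module.End.one_apply]
  exact Submodule.sub_mem _ (hXY.map_Hi hq0 hq1 v hv.2)
    (Submodule.smul_mem _ _ (Hi_anti (by omega) hv.2))

/-- For each `r`, the sum over `i` of `Lo Y i ⊓ Hi X (i + r)` is stable under `X` and `Y`, since
`X` and `Y` move the summands to neighbours up to scalars. -/
lemma split_dichotomy (hq0 : q ≠ 0) (hq1 : ∀ n : ℕ, 0 < n → q ^ n ≠ 1)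
    (hXY : Serre q X Y) (hYX : Serre q Y X)
    (hirr : ∀ S : Submodule F V, (∀ v ∈ S, X v ∈ S) → (∀ v ∈ S, Y v ∈ S) → S = ⊥ ∨ S = ⊤)
    (r : ℤ) : (⨆ i, Lo q d Y i ⊓ Hi q d X (i + r)) = ⊥ ∨
      (⨆ i, Lo q d Y i ⊓ Hi q d X (i + r)) = ⊤ := by
  set S := ⨆ i, Lo q d Y i ⊓ Hi q d X (i + r) with hS
  have hle : ∀ i, Lo q d Y i ⊓ Hi q d X (i + r) ≤ S := fun i =>
    le_iSup (fun i => Lo q d Y i ⊓ Hi q d X (i + r)) i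
  refine hirr S ?_ ?_
  · have : S ≤ S.comap X := by
      refine iSup_le fun i v hv => ?_
      have h1 := split_X hq0 hq1 hYX hv
      rw [show i + r + 1 = i + 1 + r by ring] at h1
      have h2 := S.add_mem (hle _ h1) (S.smul_mem (th q d (i + r)) (hle i hv))
      simpa using h2
    exact fun v hv => this hv
  · have : S ≤ S.comap Y := by
      refine iSup_le fun i v hv => ?_
      have h1 := split_Y hq0 hq1 hXY hv
      rw [show i + r - 1 = i - 1 + r by ring] at h1
      have h2 := S.add_mem (hle _ h1) (S.smul_mem (th q d i) (hle i hv))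
      simpa using h2
    exact fun v hv => this hv

/-- Irreducibility forces the increasing `Y`-flag and the decreasing `X`-flag to be opposite. -/
lemma oppFlags (hq0 : q ≠ 0) (hq1 : ∀ n : ℕ, 0 < n → q ^ n ≠ 1)
    (hX : Good q d X) (hY : Good q d Y) (hXY : Serre q X Y) (hYX : Serre q Y X)
    (hirr : ∀ S : Submodule F V, (∀ v ∈ S, X v ∈ S) → (∀ v ∈ S, Y v ∈ S) → S = ⊥ ∨ S = ⊤) :
    OppFlags (Lo q d Y) (Hi q d X) where
  mono := Lo_mono
  anti := Hi_anti
  bot := by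
    intro i j hij
    have hth := th_inj (d := d) hq0 hq1
    have hdich := split_dichotomy (d := d) hq0 hq1 hXY hYX hirr (j - i)
    have hle := le_iSup (fun k => Lo q d Y k ⊓ Hi q d X (k + (j - i))) i
    rw [show i + (j - i) = j by ring] at hle
    rcases hdich with h | h
    · rw [h] at hle
      exact eq_bot_iff.2 hle
    · -- Otherwise `Hi X 1` would be the whole space, although it misses the eigenspace of index 0.
      exfalso
      have h1 : (⊤ : Submodule F V) ≤ Hi q d X 1 := by
        rw [← h]
        refine iSup_le fun k => ?_
        by_cases hk : k < 0
        · rw [hY.Lo_bot hk, bot_inf_eq]; exact bot_le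
        · exact inf_le_right.trans (Hi_anti (by omega))
      have h2 := disjoint_Lo_Hi (f := X) hth (by omega : (0 : ℤ) < 1)
      have h3 := h2.mono (Ef_le_Lo (le_refl 0)) h1
      rw [disjoint_top] at h3
      exact hX.ne 0 le_rfl (by omega) h3
  top := by
    have hdich := split_dichotomy (d := d) hq0 hq1 hXY hYX hirr 0
    simp only [add_zero] at hdich
    rcases hdich with h | h
    · exfalso
      have hle := le_iSup (fun k => Lo q d Y k ⊓ Hi q d X k) 0
      rw [h, hX.Hi_zero, inf_top_eq, le_bot_iff] at hle
      exact hY.ne 0 le_rfl (by omega) (eq_bot_iff.2 ((Ef_le_Lo (le_refl 0)).trans hle.le))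
    · exact h

/-! ### The equitable relations -/

/-- The relation between consecutive generators makes `Z - (th n)⁻¹` raise the index of
`X`-eigenspaces by one. -/
lemma rel_right (hq0 : q ≠ 0)
    (h : q • (X * Z) - q⁻¹ • (Z * X) = (q - q⁻¹) • 1) {n : ℤ} {v : V}
    (hv : v ∈ Ef q d X n) : (Z - (th q d n)⁻¹ • 1 : Module.End F V) v ∈ Ef q d X (n + 1) := by
  rw [mem_Ef, th_succ hq0]
  have hv' := mem_Ef.1 hv
  have h2 := LinearMap.congr_fun h v
  simp only [LinearMap.sub_apply, LinearMap.smul_apply, Module.End.mul_apply,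
    Module.End.one_apply, hv', map_smul, map_sub] at h2 ⊢
  have ht := th_ne (d := d) hq0 n
  have h3 : X (Z v) = q⁻¹ • ((q - q⁻¹) • v + q⁻¹ • th q d n • Z v) := by
    rw [← h2, sub_add_cancel, smul_smul, inv_mul_cancel₀ hq0, one_smul]
  rw [h3]
  match_scalars <;> field_simp
  ring

/-- The relation between consecutive generators makes `Z - (th n)⁻¹` lower the index of
`Y`-eigenspaces by one. -/
lemma rel_left (hq0 : q ≠ 0)
    (h : q • (Z * Y) - q⁻¹ • (Y * Z) = (q - q⁻¹) • 1) {n : ℤ} {v : V}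
    (hv : v ∈ Ef q d Y n) : (Z - (th q d n)⁻¹ • 1 : Module.End F V) v ∈ Ef q d Y (n - 1) := by
  rw [mem_Ef, th_pred hq0]
  have hv' := mem_Ef.1 hv
  have h2 := LinearMap.congr_fun h v
  simp only [LinearMap.sub_apply, LinearMap.smul_apply, Module.End.mul_apply,
    Module.End.one_apply, hv', map_smul, map_sub] at h2 ⊢
  have ht := th_ne (d := d) hq0 n
  have h3 : Y (Z v) = q • (q • th q d n • Z v - (q - q⁻¹) • v) := by
    rw [← h2, sub_sub_cancel, smul_smul, mul_inv_cancel₀ hq0, one_smul]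
  rw [h3]
  match_scalars <;> field_simp
  ring

/-- Any operator satisfying the equitable relations with `X` and `Y` is diagonal on the split
decomposition. -/
lemma diag_of_rel (hq0 : q ≠ 0)
    (hO : OppFlags (Lo q d Y) (Hi q d X))
    (h1 : q • (X * Z) - q⁻¹ • (Z * X) = (q - q⁻¹) • 1)
    (h2 : q • (Z * Y) - q⁻¹ • (Y * Z) = (q - q⁻¹) • 1) (n : ℤ) {u : V}
    (hu : u ∈ Lo q d Y n ⊓ Hi q d X n) : Z u = (th q d n)⁻¹ • u := by
  have hsplit : ∀ (m : ℤ) (v : V), (Z - (th q d n)⁻¹ • 1 : Module.End F V) v =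
      (Z - (th q d m)⁻¹ • 1 : Module.End F V) v + ((th q d m)⁻¹ - (th q d n)⁻¹) • v := by
    intro m v
    simp only [LinearMap.sub_apply, LinearMap.smul_apply, Module.End.one_apply]
    module
  have hH : (Z - (th q d n)⁻¹ • 1 : Module.End F V) u ∈ Hi q d X (n + 1) := by
    refine map_Hi (fun m hm v hv => ?_) u hu.2
    rw [hsplit m v]
    refine Submodule.add_mem _ (Ef_le_Hi (by omega) (rel_right hq0 h1 hv)) ?_
    rcases eq_or_lt_of_le hm with rfl | hm
    · simp
    · exact Submodule.smul_mem _ _ (Ef_le_Hi (by omega) hv)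
  have hL : (Z - (th q d n)⁻¹ • 1 : Module.End F V) u ∈ Lo q d Y (n - 1) := by
    refine map_Lo (fun m hm v hv => ?_) u hu.1
    rw [hsplit m v]
    refine Submodule.add_mem _ (Ef_le_Lo (by omega) (rel_left hq0 h2 hv)) ?_
    rcases eq_or_lt_of_le hm with rfl | hm
    · simp
    · exact Submodule.smul_mem _ _ (Ef_le_Lo (by omega) hv)
  have := hO.eq_zero (by omega) hL hH
  simpa [sub_eq_zero] using this

lemma exists_mid (hq0 : q ≠ 0) (hq1 : ∀ n : ℕ, 0 < n → q ^ n ≠ 1)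
    (hO : OppFlags (Lo q d Y) (Hi q d X)) (hXY : Serre q X Y) (hYX : Serre q Y X) :
    ∃ Z : Module.End F V, q • (X * Z) - q⁻¹ • (Z * X) = (q - q⁻¹) • 1 ∧
      q • (Z * Y) - q⁻¹ • (Y * Z) = (q - q⁻¹) • 1 := by
  obtain ⟨Z, hZ⟩ := exists_diag hO.indep hO.top (fun n => (th q d n)⁻¹)
  refine ⟨Z, ext_of_iSup hO.top fun n u hu => ?_, ext_of_iSup hO.top fun n u hu => ?_⟩
  · have ht := th_ne (d := d) hq0 n
    obtain ⟨w, hw⟩ : ∃ w, w = (X - th q d n • 1 : Module.End F V) u := ⟨_, rfl⟩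
    have hw1 := split_X hq0 hq1 hYX hu
    rw [← hw] at hw1
    have hZw := hZ _ w hw1
    have hXu : X u = w + th q d n • u := by rw [hw]; simp
    simp only [LinearMap.sub_apply, LinearMap.smul_apply, Module.End.mul_apply,
      Module.End.one_apply, hZ n u hu, map_smul, hXu, map_add, hZw, th_succ hq0]
    match_scalars <;> field_simp
    ring
  · have ht := th_ne (d := d) hq0 n
    obtain ⟨w, hw⟩ : ∃ w, w = (Y - th q d n • 1 : Module.End F V) u := ⟨_, rfl⟩
    have hw1 := split_Y hq0 hq1 hXY hu
    rw [← hw] at hw1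
    have hZw := hZ _ w hw1
    have hYu : Y u = w + th q d n • u := by rw [hw]; simp
    simp only [LinearMap.sub_apply, LinearMap.smul_apply, Module.End.mul_apply,
      Module.End.one_apply, hZ n u hu, map_smul, hYu, map_add, hZw, th_pred hq0]
    match_scalars <;> field_simp
    ring

/-- The cubic relation between the two new generators: `Z` shifts the `X`-flag up and the `Y`-flag
down by one step, so it acts tridiagonally on the split decomposition that diagonalizes `W`. -/
lemma serre_mid (hq0 : q ≠ 0) (hq1 : ∀ n : ℕ, 0 < n → q ^ n ≠ 1)
    (hO' : OppFlags (Lo q d X) (Hi q d Y))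
    (h1 : q • (X * Z) - q⁻¹ • (Z * X) = (q - q⁻¹) • 1)
    (h2 : q • (Z * Y) - q⁻¹ • (Y * Z) = (q - q⁻¹) • 1)
    (h3 : q • (Y * W) - q⁻¹ • (W * Y) = (q - q⁻¹) • 1)
    (h4 : q • (W * X) - q⁻¹ • (X * W) = (q - q⁻¹) • 1) : Serre q W Z := by
  refine ext_of_iSup hO'.top fun n u hu => ?_
  have hW := fun m (v : V) hv => diag_of_rel hq0 hO' h3 h4 m (u := v) hv
  have hL : Z u ∈ Lo q d X (n + 1) := by
    refine map_Lo (fun m hm v hv => ?_) u hu.1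
    have e := Submodule.add_mem _
      (Ef_le_Lo (by omega : m + 1 ≤ n + 1) (rel_right hq0 h1 hv))
      (Submodule.smul_mem _ (th q d m)⁻¹ (Ef_le_Lo (by omega : m ≤ n + 1) hv))
    simpa using e
  have hH : Z u ∈ Hi q d Y (n - 1) := by
    refine map_Hi (fun m hm v hv => ?_) u hu.2
    have e := Submodule.add_mem _
      (Ef_le_Hi (by omega : n - 1 ≤ m - 1) (rel_left hq0 h2 hv))
      (Submodule.smul_mem _ (th q d m)⁻¹ (Ef_le_Hi (by omega : n - 1 ≤ m) hv))
    simpa using e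
  obtain ⟨a, ha, w, hw, haw⟩ := Submodule.mem_sup.1 (hO'.inf_le_three n ⟨hL, hH⟩)
  obtain ⟨b, hb, c, hc, rfl⟩ := Submodule.mem_sup.1 hw
  rw [qint_three hq0 (hq1 2 (by norm_num))]
  simp only [pow_succ, pow_zero, one_mul, LinearMap.add_apply, LinearMap.smul_apply,
    Module.End.mul_apply, map_smul, hW n u hu, ← haw, map_add, hW _ a ha, hW _ b hb,
    hW _ c hc, th_succ hq0, th_pred hq0]
  have ht := th_ne (d := d) hq0 n
  match_scalars <;> field_simp <;> ring

/-- An operator acting on the split decomposition by the scalars `(th n)⁻¹` is diagonalizable with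
the same eigenvalues `th n`, because `(th n)⁻¹ = th (d - n)` and every component is nonzero. -/
lemma type_mid (hq0 : q ≠ 0) (hq1 : ∀ n : ℕ, 0 < n → q ^ n ≠ 1)
    (hX : Good q d X) (hY : Good q d Y) (hO : OppFlags (Lo q d Y) (Hi q d X))
    (hZ : ∀ n, ∀ u ∈ Lo q d Y n ⊓ Hi q d X n, Z u = (th q d n)⁻¹ • u) :
    SemisimpleOn F Z ∧ EigSet F Z =
      {θ : F | ∃ n : ℕ, n ≤ d ∧ θ = q ^ ((d : ℤ) - 2 * (n : ℤ))} := by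
  have hth := th_inj (d := d) hq0 hq1
  have hle : ∀ n, Lo q d Y n ⊓ Hi q d X n ≤ Module.End.eigenspace Z (th q d n)⁻¹ :=
    fun n u hu => Module.End.mem_eigenspace_iff.2 (hZ n u hu)
  have hinv : ∀ n : ℤ, (th q d n)⁻¹ = th q d (d - n) := by
    intro n
    unfold th
    rw [← zpow_neg]
    congr 1
    ring
  refine ⟨?_, Set.ext fun θ => ⟨fun hθ => ?_, ?_⟩⟩
  · rw [SemisimpleOn, eq_top_iff, ← hO.top]
    exact iSup_le fun n => (hle n).trans (le_iSup (Module.End.eigenspace Z) _)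
  · by_contra hcon
    refine hθ ?_
    have hd := Module.End.eigenspaces_iSupIndep Z θ
    have htop : (⊤ : Submodule F V) ≤ ⨆ j, ⨆ (_ : j ≠ θ), Module.End.eigenspace Z j := by
      rw [← hO.top]
      refine iSup_le fun n => ?_
      by_cases h0 : n < 0
      · rw [hY.Lo_bot h0, bot_inf_eq]; exact bot_le
      by_cases h1 : (d : ℤ) < n
      · rw [hX.Hi_bot h1, inf_bot_eq]; exact bot_le
      refine (hle n).trans (le_iSup₂_of_le (th q d n)⁻¹ ?_ le_rfl)
      rintro rfl
      refine hcon ⟨((d : ℤ) - n).toNat, by omega, ?_⟩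
      rw [hinv, th, Int.toNat_of_nonneg (by omega)]
    exact disjoint_top.1 (hd.mono_right htop)
  · rintro ⟨n, hn, rfl⟩ hbot
    have h1 := hle (d - n)
    rw [hinv, sub_sub_cancel] at h1
    have hbot' : Module.End.eigenspace Z (th q d n) = ⊥ := hbot
    rw [hbot', le_bot_iff] at h1
    have h2 := hO.le_sup_pred (d - n)
    rw [h1, bot_sup_eq] at h2
    exact hY.not_le_Lo_pred hth (by omega) (by omega) h2

lemma good_of_type (hq0 : q ≠ 0) (hq1 : ∀ n : ℕ, 0 < n → q ^ n ≠ 1)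
    (hss : SemisimpleOn F f)
    (he : EigSet F f = {θ : F | ∃ n : ℕ, n ≤ d ∧ θ = q ^ ((d : ℤ) - 2 * (n : ℤ))}) :
    Good q d f where
  top := by
    rw [eq_top_iff, ← hss]
    refine iSup_le fun θ => ?_
    by_cases h : Module.End.eigenspace f θ = ⊥
    · rw [h]; exact bot_le
    · have : θ ∈ EigSet F f := h
      rw [he] at this
      obtain ⟨n, -, rfl⟩ := this
      exact le_iSup (Ef q d f) n
  ne := by
    intro n h0 hd
    have : th q d n ∈ EigSet F f := by
      rw [he]
      exact ⟨n.toNat, by omega, by rw [th, Int.toNat_of_nonneg h0]⟩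
    exact this
  bot := by
    intro n hn
    by_contra h
    have : th q d n ∈ EigSet F f := h
    rw [he] at this
    obtain ⟨m, hm, hmn⟩ := this
    have := th_inj (d := d) hq0 hq1 (show th q d n = th q d m from hmn)
    omega

lemma invariant_of_gens (Φ : Uqp F q →ₐ[F] Module.End F V) (S : Submodule F V)
    (hx : ∀ v ∈ S, Φ (ux F q) v ∈ S) (hy : ∀ v ∈ S, Φ (uy F q) v ∈ S) (a : Uqp F q) :
    ∀ v ∈ S, Φ a v ∈ S := by
  obtain ⟨a, rfl⟩ := RingQuot.mkAlgHom_surjective F (UqpRel F q) a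
  induction a using FreeAlgebra.induction with
  | grade0 r =>
    intro v hv
    simpa [Module.algebraMap_end_apply] using S.smul_mem r hv
  | grade1 b =>
    cases b
    · exact hy
    · exact hx
  | mul a b ha hb =>
    intro v hv
    simpa using ha _ (hb v hv)
  | add a b ha hb =>
    intro v hv
    simpa using S.add_mem (ha v hv) (hb v hv)

/-- Operators `X, Z, Y, W` satisfying the relations of `x₀, x₁, x₂, x₃` define a representation of
`□_q` on `V`. -/
lemma exists_rep
    (h1 : q • (X * Z) - q⁻¹ • (Z * X) = (q - q⁻¹) • 1)
    (h2 : q • (Z * Y) - q⁻¹ • (Y * Z) = (q - q⁻¹) • 1)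
    (h3 : q • (Y * W) - q⁻¹ • (W * Y) = (q - q⁻¹) • 1)
    (h4 : q • (W * X) - q⁻¹ • (X * W) = (q - q⁻¹) • 1)
    (s0 : Serre q X Y) (s1 : Serre q Z W) (s2 : Serre q Y X) (s3 : Serre q W Z) :
    ∃ π : BoxQ F q →ₐ[F] Module.End F V, π (bx F q 0) = X ∧ π (bx F q 2) = Y := by
  let g : ZMod 4 → Module.End F V := fun i => (![X, Z, Y, W] : Fin 4 → Module.End F V) i
  have hg : ∀ ⦃a b : FreeAlgebra F (ZMod 4)⦄, BoxRel F q a b →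
      FreeAlgebra.lift F g a = FreeAlgebra.lift F g b := by
    rintro _ _ (i | i)
    · simp only [map_sub, map_smul, map_mul, map_one, FreeAlgebra.lift_ι_apply]
      fin_cases i
      · exact h1
      · exact h2
      · exact h3
      · exact h4
    · simp only [map_add, map_smul, map_mul, map_pow, FreeAlgebra.lift_ι_apply]
      fin_cases i
      · exact s0
      · exact s1
      · exact s2
      · exact s3
  refine ⟨RingQuot.liftAlgHom F ⟨FreeAlgebra.lift F g, hg⟩, ?_, ?_⟩
  · rw [bx, RingQuot.liftAlgHom_mkAlgHom_apply, FreeAlgebra.lift_ι_apply]; rfl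
  · rw [bx, RingQuot.liftAlgHom_mkAlgHom_apply, FreeAlgebra.lift_ι_apply]; rfl

lemma rep_rel1 (π : BoxQ F q →ₐ[F] Module.End F V) (i : ZMod 4) :
    q • (π (bx F q i) * π (bx F q (i + 1))) - q⁻¹ • (π (bx F q (i + 1)) * π (bx F q i)) =
      (q - q⁻¹) • 1 := by
  have := congrArg π (RingQuot.mkAlgHom_rel F (BoxRel.rel1 (F := F) (q := q) i))
  simp only [map_sub, map_smul, map_mul, map_one] at this
  exact this

lemma uqp_serre_x (Φ : Uqp F q →ₐ[F] Module.End F V) : Serre q (Φ (ux F q)) (Φ (uy F q)) := by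
  have := congrArg Φ (RingQuot.mkAlgHom_rel F (UqpRel.relx (F := F) (q := q)))
  simp only [map_add, map_smul, map_mul, map_pow] at this
  exact this

lemma uqp_serre_y (Φ : Uqp F q →ₐ[F] Module.End F V) : Serre q (Φ (uy F q)) (Φ (ux F q)) := by
  have := congrArg Φ (RingQuot.mkAlgHom_rel F (UqpRel.rely (F := F) (q := q)))
  simp only [map_add, map_smul, map_mul, map_pow] at this
  exact this

end Aux

/-- A NonNil finite-dimensional irreducible `U_q^+`-module of type `(1,1)` admits a
unique `□_q`-module structure in which `x₀` acts as `x` and `x₂` acts as `y`;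
this structure is irreducible of type 1. -/
theorem stmt11 [IsAlgClosed F] [CharZero F] (q : F) (hq0 : q ≠ 0)
    (hq1 : ∀ n : ℕ, 0 < n → q ^ n ≠ 1)
    (V : Type) [AddCommGroup V] [Module F V] [FiniteDimensional F V]
    (Φ : Uqp F q →ₐ[F] Module.End F V) (hirr : IsIrrep F Φ)
    (hnnx : ¬ IsNilpotent (Φ (ux F q))) (hnny : ¬ IsNilpotent (Φ (uy F q)))
    (d : ℕ)
    (hssx : SemisimpleOn F (Φ (ux F q))) (hssy : SemisimpleOn F (Φ (uy F q)))
    (hex : EigSet F (Φ (ux F q)) =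
      {θ : F | ∃ n : ℕ, n ≤ d ∧ θ = q ^ ((d : ℤ) - 2 * (n : ℤ))})
    (hey : EigSet F (Φ (uy F q)) =
      {θ : F | ∃ n : ℕ, n ≤ d ∧ θ = q ^ ((d : ℤ) - 2 * (n : ℤ))}) :
    (∃! π : BoxQ F q →ₐ[F] Module.End F V,
        π (bx F q 0) = Φ (ux F q) ∧ π (bx F q 2) = Φ (uy F q)) ∧
    ∀ π : BoxQ F q →ₐ[F] Module.End F V,
      π (bx F q 0) = Φ (ux F q) → π (bx F q 2) = Φ (uy F q) →
      IsIrrep F π ∧ ∃ d' : ℕ, Type1Diam F q π d' := by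
  have hX := good_of_type hq0 hq1 hssx hex
  have hY := good_of_type hq0 hq1 hssy hey
  have hXY := uqp_serre_x Φ
  have hYX := uqp_serre_y Φ
  have hsub : ∀ S : Submodule F V, (∀ v ∈ S, Φ (ux F q) v ∈ S) → (∀ v ∈ S, Φ (uy F q) v ∈ S) →
      S = ⊥ ∨ S = ⊤ := fun S h1 h2 => hirr.2 S (invariant_of_gens Φ S h1 h2)
  have hO := oppFlags hq0 hq1 hX hY hXY hYX hsub
  have hO' := oppFlags hq0 hq1 hY hX hYX hXY (fun S h1 h2 => hsub S h2 h1)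
  -- Any solution acts on the two split decompositions by prescribed scalars.
  have hdiag : ∀ π : BoxQ F q →ₐ[F] Module.End F V,
      π (bx F q 0) = Φ (ux F q) → π (bx F q 2) = Φ (uy F q) →
      (∀ n, ∀ u ∈ Lo q d (Φ (uy F q)) n ⊓ Hi q d (Φ (ux F q)) n,
        π (bx F q 1) u = (th q d n)⁻¹ • u) ∧
      (∀ n, ∀ u ∈ Lo q d (Φ (ux F q)) n ⊓ Hi q d (Φ (uy F q)) n,
        π (bx F q 3) u = (th q d n)⁻¹ • u) := by
    intro π h0 h2
    have r0 := rep_rel1 π 0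
    have r1 := rep_rel1 π 1
    have r2 := rep_rel1 π 2
    have r3 := rep_rel1 π 3
    rw [show (0 : ZMod 4) + 1 = 1 from rfl, h0] at r0
    rw [show (1 : ZMod 4) + 1 = 2 from rfl, h2] at r1
    rw [show (2 : ZMod 4) + 1 = 3 from rfl, h2] at r2
    rw [show (3 : ZMod 4) + 1 = 0 from rfl, h0] at r3
    exact ⟨fun n u hu => diag_of_rel hq0 hO r0 r1 n hu,
      fun n u hu => diag_of_rel hq0 hO' r2 r3 n hu⟩
  refine ⟨?_, fun π h0 h2 => ⟨⟨hirr.1, fun S hS => hsub S ?_ ?_⟩, d, fun i => ?_⟩⟩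
  · obtain ⟨Z, z1, z2⟩ := exists_mid hq0 hq1 hO hXY hYX
    obtain ⟨W, w1, w2⟩ := exists_mid hq0 hq1 hO' hYX hXY
    obtain ⟨π, hπ0, hπ2⟩ := exists_rep z1 z2 w1 w2 hXY (serre_mid hq0 hq1 hO w1 w2 z1 z2) hYX
      (serre_mid hq0 hq1 hO' z1 z2 w1 w2)
    refine ⟨π, ⟨hπ0, hπ2⟩, fun π' h' => ?_⟩
    have key : ∀ i, π' (bx F q i) = π (bx F q i) := by
      obtain ⟨a1, a3⟩ := hdiag π hπ0 hπ2
      obtain ⟨b1, b3⟩ := hdiag π' h'.1 h'.2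
      intro i
      fin_cases i
      · exact h'.1.trans hπ0.symm
      · exact ext_of_iSup hO.top fun n u hu => (b1 n u hu).trans (a1 n u hu).symm
      · exact h'.2.trans hπ2.symm
      · exact ext_of_iSup hO'.top fun n u hu => (b3 n u hu).trans (a3 n u hu).symm
    refine RingQuot.ringQuot_ext' F _ _ (FreeAlgebra.hom_ext (funext fun i => ?_))
    exact key i
  · intro v hv
    rw [← h0]; exact hS _ v hv
  · intro v hv
    rw [← h2]; exact hS _ v hv
  · obtain ⟨a1, a3⟩ := hdiag π h0 h2
    fin_cases i
    · exact h0 ▸ ⟨hssx, hex⟩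
    · exact type_mid hq0 hq1 hX hY hO a1
    · exact h2 ▸ ⟨hssy, hey⟩
    · exact type_mid hq0 hq1 hY hX hO' a3
end
end
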